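/- Let X be an X-valued stochastic process satisfying the tightness/equicontinuity condition: for all [a,b] ⊂ ℝ, ε > 0, η > 0, there exists δ > 0 such that for all r ∈ ℝ, P{ sup_{|t−s|<δ, t,s∈[a,b]} d(X(r+t), X(r+s)) > η } < ε. Then X is almost automorphic in finite dimensional distributions if and only if X is almost automorphic in distribution (i.e., t ↦ Law(X(t+·)) is almost automorphic in P(C_k(ℝ, X))). -/

import Mathlib

open Filter Topology MeasureTheory Set

/-- `f : ℝ → X` is almost automorphic. -/
def IsAlmostAutomorphic {X : Type*} [TopologicalSpace X] (f : ℝ → X) : Prop :=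
  ∀ t' : ℕ → ℝ, ∃ φ : ℕ → ℕ, StrictMono φ ∧ ∃ g : ℝ → X,
    (∀ t : ℝ, Tendsto (fun n => f (t + t' (φ n))) atTop (𝓝 (g t))) ∧
    (∀ t : ℝ, Tendsto (fun n => g (t - t' (φ n))) atTop (𝓝 (f t)))

/-- Translation of a continuous path: `shift t x = x(t + ·)`. -/
noncomputable def shift {E : Type*} [MetricSpace E] (t : ℝ) (x : C(ℝ, E)) : C(ℝ, E) :=
  x.comp ⟨fun s => t + s, by continuity⟩

/-!
The laws `L t` of the translated paths form an orbit: `L (t + s)` is the push-forward of `L t` under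
the continuous map `shift s`. For such an orbit with relatively compact range, convergence of
`L (t' n)` along a subsequence forces convergence of `L (t + t' n)` for every `t`, and almost
automorphy can be checked after composing with a separating family of continuous maps; the
finite dimensional distributions are such a family. Relative compactness is tightness, by
Prokhorov's theorem, and tightness follows from Arzelà–Ascoli: almost automorphic one-dimensional
marginals are tight, and the oscillation is controlled by hypothesis.
-/

section Topology

variable {Y : Type*} [TopologicalSpace Y]

lemma tendsto_of_tendsto_comp_of_isCompact {α ι : Type*} {Z : ι → Type*}
    [∀ i, TopologicalSpace (Z i)] [∀ i, T2Space (Z i)] {K : Set Y} (hK : IsCompact K)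
    {Φ : ∀ i, Y → Z i} (hΦ : ∀ i, Continuous (Φ i))
    (hsep : ∀ y y', (∀ i, Φ i y = Φ i y') → y = y')
    {l : Filter α} {u : α → Y} (hu : ∀ᶠ a in l, u a ∈ K) {y : Y}
    (hlim : ∀ i, Tendsto (fun a => Φ i (u a)) l (𝓝 (Φ i y))) : Tendsto u l (𝓝 y) := by
  refine hK.tendsto_nhds_of_unique_mapClusterPt hu fun z _ hz => hsep z y fun i => ?_
  have hcluster : MapClusterPt (Φ i z) l (Φ i ∘ u) := hz.continuousAt_comp (hΦ i).continuousAt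
  exact eq_of_nhds_neBot (hcluster.clusterPt.mono (hlim i)).neBot

lemma isCompact_closure_of_forall_exists_tendsto_subseq [TopologicalSpace.MetrizableSpace Y]
    {S : Set Y} (hS : ∀ x : ℕ → Y, (∀ n, x n ∈ S) →
      ∃ φ : ℕ → ℕ, StrictMono φ ∧ ∃ y, Tendsto (x ∘ φ) atTop (𝓝 y)) :
    IsCompact (closure S) := by
  let := TopologicalSpace.metrizableSpaceMetric Y
  refine IsSeqCompact.isCompact fun y hy => ?_
  have happrox (n : ℕ) : ∃ x ∈ S, dist (y n) x < 1 / ((n : ℝ) + 1) :=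
    Metric.mem_closure_iff.1 (hy n) _ (by positivity)
  choose x hxS hyx using happrox
  obtain ⟨φ, hφ, z, hxz⟩ := hS x hxS
  have hdist : Tendsto (fun n => dist (x n) (y n)) atTop (𝓝 0) :=
    squeeze_zero (fun _ => dist_nonneg) (fun n => (dist_comm (x n) (y n)).trans_le (hyx n).le)
      tendsto_one_div_add_atTop_nhds_zero_nat
  have hyz : Tendsto (y ∘ φ) atTop (𝓝 z) :=
    hxz.congr_dist (hdist.comp hφ.tendsto_atTop)
  exact ⟨z, isClosed_closure.mem_of_tendsto hyz (.of_forall fun n => hy _), φ, hφ, hyz⟩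

end Topology

namespace IsAlmostAutomorphic

variable {Y : Type*} [TopologicalSpace Y] {f : ℝ → Y}

lemma continuous_comp {Z : Type*} [TopologicalSpace Z] (hf : IsAlmostAutomorphic f) {Φ : Y → Z}
    (hΦ : Continuous Φ) : IsAlmostAutomorphic fun t => Φ (f t) := by
  intro t'
  obtain ⟨φ, hφ, g, hadd, hsub⟩ := hf t'
  exact ⟨φ, hφ, Φ ∘ g, fun t => (hΦ.tendsto _).comp (hadd t), fun t => (hΦ.tendsto _).comp (hsub t)⟩

lemma isCompact_closure_range [TopologicalSpace.MetrizableSpace Y] (hf : IsAlmostAutomorphic f) :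
    IsCompact (closure (range f)) := by
  refine isCompact_closure_of_forall_exists_tendsto_subseq fun x hx => ?_
  choose t' ht' using hx
  obtain ⟨φ, hφ, g, hadd, -⟩ := hf t'
  exact ⟨φ, hφ, g 0, (hadd 0).congr fun n => by rw [zero_add, ht', Function.comp_apply]⟩

lemma tendsto_sub_of_tendsto_add [T2Space Y] (hf : IsAlmostAutomorphic f) {u : ℕ → ℝ} {g : ℝ → Y}
    (hadd : ∀ t, Tendsto (fun n => f (t + u n)) atTop (𝓝 (g t))) (t : ℝ) :
    Tendsto (fun n => g (t - u n)) atTop (𝓝 (f t)) := by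
  refine tendsto_of_subseq_tendsto fun ns hns => ?_
  obtain ⟨φ, hφ, k, hadd', hsub'⟩ := hf (u ∘ ns)
  have hgk : k = g := funext fun s =>
    tendsto_nhds_unique (hadd' s) ((hadd s).comp (hns.comp hφ.tendsto_atTop))
  exact ⟨φ, hgk ▸ hsub' t⟩

theorem of_forall_comp [FirstCountableTopology Y] (hcomp : IsCompact (closure (range f)))
    (hshift : ∀ s, ∃ θ : Y → Y, Continuous θ ∧ ∀ t, θ (f t) = f (t + s))
    {ι : Type*} {Z : ι → Type*} [∀ i, TopologicalSpace (Z i)] [∀ i, T2Space (Z i)]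
    {Φ : ∀ i, Y → Z i} (hΦ : ∀ i, Continuous (Φ i))
    (hsep : ∀ y y', (∀ i, Φ i y = Φ i y') → y = y')
    (h : ∀ i, IsAlmostAutomorphic fun t => Φ i (f t)) : IsAlmostAutomorphic f := by
  intro t'
  choose θ hθ hθf using hshift
  obtain ⟨y, -, φ, hφ, hy⟩ :=
    hcomp.tendsto_subseq (x := f ∘ t') fun n => subset_closure (mem_range_self _)
  have hadd (t : ℝ) : Tendsto (fun n => f (t + t' (φ n))) atTop (𝓝 (θ t y)) :=
    (((hθ t).tendsto y).comp hy).congr fun n => by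
      simp only [Function.comp_apply, hθf, add_comm]
  have hmem (t : ℝ) : θ t y ∈ closure (range f) :=
    mem_closure_of_tendsto (hadd t) (.of_forall fun n => mem_range_self _)
  refine ⟨φ, hφ, fun t => θ t y, hadd, fun t => ?_⟩
  exact tendsto_of_tendsto_comp_of_isCompact hcomp hΦ hsep (.of_forall fun n => hmem _) fun i =>
    (h i).tendsto_sub_of_tendsto_add (g := fun s => Φ i (θ s y))
      (fun s => ((hΦ i).tendsto _).comp (hadd s)) t

end IsAlmostAutomorphic

section ArzelaAscoli

open scoped Uniformity

lemma totallyBounded_range_of_equicontinuous_of_dense {ι T E : Type*} [TopologicalSpace T]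
    [UniformSpace E] {F : ι → T → E} (hF : Equicontinuous F) {D : Set T} (hD : Dense D)
    (hbdd : ∀ q ∈ D, TotallyBounded (range fun i => F i q)) (t : T) :
    TotallyBounded (range fun i => F i t) := by
  intro V hV
  obtain ⟨W, hW, hWV⟩ := comp_mem_uniformity_sets hV
  obtain ⟨q, hq, hqD⟩ := mem_closure_iff_nhds.1 (hD t) _ (hF t W hW)
  obtain ⟨A, hA, hcover⟩ := hbdd q hqD W hW
  refine ⟨A, hA, ?_⟩
  rintro _ ⟨i, rfl⟩
  obtain ⟨y, hyA, hy⟩ := mem_iUnion₂.1 (hcover (mem_range_self i))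
  exact mem_iUnion₂.2 ⟨y, hyA, hWV ⟨F i q, hq i, hy⟩⟩

lemma isCompact_closure_of_equicontinuous_of_dense {T E : Type*} [TopologicalSpace T]
    [CompactlyCoherentSpace T] [UniformSpace E] [CompleteSpace E] [T2Space E] {S : Set C(T, E)}
    (hS : Equicontinuous fun x : S => (x : T → E)) {D : Set T} (hD : Dense D)
    (hbdd : ∀ q ∈ D, TotallyBounded ((fun x : C(T, E) => x q) '' S)) :
    IsCompact (closure S) := by
  have hcover : ⋃₀ {C : Set T | IsCompact C} = univ :=
    eq_univ_of_forall fun t => mem_sUnion_of_mem (mem_singleton t) isCompact_singleton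
  have : T2Space (UniformOnFun T E {C : Set T | IsCompact C}) :=
    UniformOnFun.t2Space_of_covering hcover
  have hemb := ContinuousMap.isUniformEmbedding_toUniformOnFunIsCompact (α := T) (β := E)
  refine ArzelaAscoli.isCompact_closure_of_isClosedEmbedding
    (𝔖 := {C : Set T | IsCompact C}) (F := fun x : C(T, E) => (x : T → E)) (fun _ hC => hC)
    ⟨hemb.isEmbedding, hemb.isUniformInducing.isComplete_range.isClosed⟩
    (fun C _ => hS.equicontinuousOn C) fun _ _ t _ => ?_
  simp only [image_eq_range] at hbdd
  have htot := totallyBounded_range_of_equicontinuous_of_dense hS hD hbdd t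
  exact ⟨_, htot.closure.isCompact_of_isClosed isClosed_closure,
    fun x hx => subset_closure ⟨⟨x, hx⟩, rfl⟩⟩

end ArzelaAscoli

section Oscillation

variable {T E : Type*} [PseudoMetricSpace T] [PseudoMetricSpace E]

/-- The continuous maps whose modulus of continuity on `C` at scale `δ` exceeds `η`. It replaces the
supremum of `dist (x t) (x s)` over `t, s ∈ C` with `dist t s < δ`, and is open because that
supremum is lower semicontinuous in `x`. -/
def oscillationSet (C : Set T) (δ η : ℝ) : Set C(T, E) :=
  {x | ∃ t ∈ C, ∃ s ∈ C, dist t s < δ ∧ η < dist (x t) (x s)}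

lemma isOpen_oscillationSet (C : Set T) (δ η : ℝ) :
    IsOpen (oscillationSet C δ η : Set C(T, E)) := by
  have hunion : (oscillationSet C δ η : Set C(T, E)) =
      ⋃ t ∈ C, ⋃ s ∈ C, ⋃ _ : dist t s < δ, {x | η < dist (x t) (x s)} := by
    ext x
    simp only [oscillationSet, mem_ofPred_eq, mem_iUnion, exists_prop]
  rw [hunion]
  exact isOpen_biUnion fun t _ => isOpen_biUnion fun s _ => isOpen_iUnion fun _ =>
    isOpen_lt continuous_const (by fun_prop)

lemma oscillationSet_mono {C C' : Set T} (hC : C ⊆ C') (δ η : ℝ) :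
    (oscillationSet C δ η : Set C(T, E)) ⊆ oscillationSet C' δ η :=
  fun _ ⟨t, ht, s, hs, hts⟩ => ⟨t, hC ht, s, hC hs, hts⟩

lemma equicontinuous_of_disjoint_oscillationSet {S : Set C(T, E)}
    (hS : ∀ t, ∃ C ∈ 𝓝 t, ∀ ε > 0, ∃ η < ε, ∃ δ > 0, Disjoint S (oscillationSet C δ η)) :
    Equicontinuous fun x : S => (x : T → E) := by
  intro t
  rw [Metric.equicontinuousAt_iff_right]
  intro ε hε
  obtain ⟨C, hC, hosc⟩ := hS t
  obtain ⟨η, hη, δ, hδ, hdisj⟩ := hosc ε hε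
  filter_upwards [hC, Metric.ball_mem_nhds t hδ] with s hsC hst x
  by_contra! hx
  exact hdisj.le_bot ⟨x.2, t, mem_of_mem_nhds hC, s, hsC, Metric.mem_ball'.1 hst, hη.trans_le hx⟩

end Oscillation

section Tightness

open scoped ENNReal

lemma exists_forall_measure_iUnion_le {α ι : Type*} [MeasurableSpace α] [Countable ι]
    {S : Set (Measure α)} {𝓑 : ι → Set (Set α)}
    (h𝓑 : ∀ i, ∀ ε : ℝ≥0∞, 0 < ε → ∃ B ∈ 𝓑 i, ∀ μ ∈ S, μ B ≤ ε) {ε : ℝ≥0∞} (hε : 0 < ε) :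
    ∃ B : ι → Set α, (∀ i, B i ∈ 𝓑 i) ∧ ∀ μ ∈ S, μ (⋃ i, B i) ≤ ε := by
  obtain ⟨ε', hε', hsum⟩ := ENNReal.exists_pos_sum_of_countable' hε.ne' ι
  choose B hB hBε using fun i => h𝓑 i (ε' i) (hε' i)
  exact ⟨B, hB, fun μ hμ => (measure_iUnion_le B).trans <|
    (ENNReal.tsum_le_tsum fun i => hBε i μ hμ).trans hsum.le⟩

variable {T E : Type*} [MetricSpace E]

lemma isCompact_closure_setOf_notMem_oscillationSet [PseudoMetricSpace T] [CompleteSpace E]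
    {D : Set T} (hD : Dense D) {K : D → Set E} (hK : ∀ q, IsCompact (K q))
    (C : CompactExhaustion T) {δ : ℕ × ℕ → ℝ} (hδ : ∀ p, 0 < δ p) :
    IsCompact (closure {x : C(T, E) | (∀ q, x q ∈ K q) ∧
      ∀ p, x ∉ oscillationSet (C p.1) (δ p) (1 / ((p.2 : ℝ) + 1))}) := by
  refine isCompact_closure_of_equicontinuous_of_dense
    (equicontinuous_of_disjoint_oscillationSet fun t => ?_) hD fun q hq =>
      (hK ⟨q, hq⟩).totallyBounded.subset (image_subset_iff.2 fun x hx => hx.1 ⟨q, hq⟩)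
  obtain ⟨n, hn⟩ := C.exists_mem_nhds t
  refine ⟨C n, hn, fun ε hε => ?_⟩
  obtain ⟨m, hm⟩ := exists_nat_one_div_lt hε
  exact ⟨_, hm, δ (n, m), hδ _, disjoint_left.2 fun x hx => hx.2 (n, m)⟩

variable [MeasurableSpace E] [BorelSpace E]

lemma exists_isCompact_measure_eval_notMem_le [TopologicalSpace T] [MeasurableSpace C(T, E)]
    [OpensMeasurableSpace C(T, E)] {S : Set (Measure C(T, E))} {t : T}
    (hS : IsTightMeasureSet (Measure.map (fun x : C(T, E) => x t) '' S)) {ε : ℝ≥0∞} (hε : 0 < ε) :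
    ∃ K : Set E, IsCompact K ∧ ∀ μ ∈ S, μ {x | x t ∉ K} ≤ ε := by
  obtain ⟨K, hK, hKε⟩ := isTightMeasureSet_iff_exists_isCompact_measure_compl_le.1 hS ε hε
  refine ⟨K, hK, fun μ hμ => ?_⟩
  have heval : Measurable fun x : C(T, E) => x t := (by fun_prop : Continuous _).measurable
  have hle := hKε _ (mem_image_of_mem _ hμ)
  rwa [Measure.map_apply heval hK.measurableSet.compl] at hle

theorem isTightMeasureSet_of_forall_oscillationSet_le [PseudoMetricSpace T]
    [WeaklyLocallyCompactSpace T] [SigmaCompactSpace T] [CompleteSpace E]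
    [MeasurableSpace C(T, E)] [OpensMeasurableSpace C(T, E)] {S : Set (Measure C(T, E))}
    (heval : ∀ t, IsTightMeasureSet (Measure.map (fun x : C(T, E) => x t) '' S))
    (hosc : ∀ C : Set T, IsCompact C → ∀ ε : ℝ≥0∞, 0 < ε → ∀ η : ℝ, 0 < η →
      ∃ δ : ℝ, 0 < δ ∧ ∀ μ ∈ S, μ (oscillationSet C δ η) ≤ ε) :
    IsTightMeasureSet S := by
  rw [isTightMeasureSet_iff_exists_isCompact_measure_compl_le]
  intro ε hε
  obtain ⟨D, hDc, hD⟩ := TopologicalSpace.exists_countable_dense T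
  have := hDc.to_subtype
  let C : CompactExhaustion T := default
  obtain ⟨A, hA, hAε⟩ := exists_forall_measure_iUnion_le (S := S) (ε := ε / 2)
    (𝓑 := fun q : D => {A | ∃ K : Set E, IsCompact K ∧ A = {x : C(T, E) | x q ∉ K}})
    (fun q ε' hε' =>
      let ⟨K, hK, hKε⟩ := exists_isCompact_measure_eval_notMem_le (heval q) hε'
      ⟨_, ⟨K, hK, rfl⟩, hKε⟩)
    (ENNReal.half_pos hε.ne')
  obtain ⟨B, hB, hBε⟩ := exists_forall_measure_iUnion_le (S := S) (ε := ε / 2)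
    (𝓑 := fun p : ℕ × ℕ => {B | ∃ δ : ℝ, 0 < δ ∧
      B = (oscillationSet (C p.1) δ (1 / ((p.2 : ℝ) + 1)) : Set C(T, E))})
    (fun p ε' hε' =>
      let ⟨δ, hδ, hδε⟩ := hosc (C p.1) (C.isCompact p.1) ε' hε' _ Nat.one_div_pos_of_nat
      ⟨_, ⟨δ, hδ, rfl⟩, hδε⟩)
    (ENNReal.half_pos hε.ne')
  choose K hK hAK using hA
  choose δ hδ hBδ using hB
  refine ⟨_, isCompact_closure_setOf_notMem_oscillationSet hD hK C hδ, fun μ hμ => ?_⟩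
  calc μ (closure _)ᶜ ≤ μ ((⋃ q, A q) ∪ ⋃ p, B p) := by
        refine measure_mono (compl_subset_comm.1 fun x hx => subset_closure ?_)
        simpa [hAK, hBδ] using hx
    _ ≤ ε / 2 + ε / 2 := (measure_union_le _ _).trans (add_le_add (hAε μ hμ) (hBε μ hμ))
    _ = ε := ENNReal.add_halves ε

end Tightness

section FiniteDimensionalDistributions

variable {T E : Type*} [TopologicalSpace T]

/-- Evaluation of a path at a family of times; push-forward of a law on path space under `evalAt ts`
is the finite dimensional distribution at the times `ts`. -/
def evalAt [TopologicalSpace E] {ι : Type*} (ts : ι → T) (x : C(T, E)) : ι → E := fun i => x (ts i)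

lemma continuous_evalAt [TopologicalSpace E] {ι : Type*} (ts : ι → T) :
    Continuous (evalAt ts : C(T, E) → ι → E) :=
  continuous_pi fun i => continuous_eval_const (ts i)

lemma evalAt_injective_of_dense [TopologicalSpace E] [T2Space E] {D : Set T} (hD : Dense D) :
    Function.Injective (evalAt ((↑) : D → T) : C(T, E) → D → E) := fun x y hxy =>
  DFunLike.coe_injective <| Continuous.ext_on hD x.continuous y.continuous fun t ht =>
    congrFun hxy ⟨t, ht⟩

section MeasurableEval

variable [TopologicalSpace E] [SecondCountableTopology E] [MeasurableSpace E] [BorelSpace E]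
  [MeasurableSpace C(T, E)] [OpensMeasurableSpace C(T, E)]

lemma measurable_evalAt {ι : Type*} [Countable ι] (ts : ι → T) :
    Measurable (evalAt ts : C(T, E) → ι → E) :=
  (continuous_evalAt ts).measurable

/-- The finite dimensional distribution at the times `ts` of a law on path space. -/
noncomputable def finDimLaw {ι : Type*} [Finite ι] (ts : ι → T)
    (μ : ProbabilityMeasure C(T, E)) : ProbabilityMeasure (ι → E) :=
  μ.map (measurable_evalAt ts).aemeasurable

lemma continuous_finDimLaw {ι : Type*} [Finite ι] (ts : ι → T) :
    Continuous (finDimLaw ts : ProbabilityMeasure C(T, E) → ProbabilityMeasure (ι → E)) :=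
  ProbabilityMeasure.continuous_map (continuous_evalAt ts)

lemma map_evalAt_eq_of_forall_fin {μ ν : Measure C(T, E)} [IsFiniteMeasure ν]
    (h : ∀ (m : ℕ) (ts : Fin m → T), μ.map (evalAt ts) = ν.map (evalAt ts))
    {ι : Type*} [Countable ι] (ts : ι → T) : μ.map (evalAt ts) = ν.map (evalAt ts) := by
  have hts : Measurable (evalAt ts : C(T, E) → ι → E) := measurable_evalAt ts
  refine IsProjectiveLimit.unique (P := fun I : Finset ι => (ν.map (evalAt ts)).map I.restrict)
    (fun I => ?_) fun I => rfl
  let e := I.equivFin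
  have hmeas : Measurable fun (y : Fin I.card → E) (i : I) => y (e i) := by fun_prop
  have hfactor : I.restrict ∘ (evalAt ts : C(T, E) → ι → E) =
      (fun (y : Fin I.card → E) i => y (e i)) ∘ evalAt fun j => ts (e.symm j) := by
    ext x i
    simp [evalAt]
  have hfin : Measurable (evalAt (fun j => ts (e.symm j)) : C(T, E) → Fin I.card → E) :=
    measurable_evalAt _
  calc (μ.map (evalAt ts)).map I.restrict
      = (μ.map (evalAt fun j => ts (e.symm j))).map fun y i => y (e i) := by
        rw [Measure.map_map (by fun_prop) hts, hfactor, Measure.map_map hmeas hfin]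
    _ = (ν.map (evalAt fun j => ts (e.symm j))).map fun y i => y (e i) := by rw [h]
    _ = (ν.map (evalAt ts)).map I.restrict := by
        rw [Measure.map_map (by fun_prop) hts, hfactor, Measure.map_map hmeas hfin]

end MeasurableEval

variable [LocallyCompactSpace T] [SecondCountableTopology T] [TopologicalSpace E] [PolishSpace E]

lemma polishSpace_continuousMap : PolishSpace C(T, E) := by
  let := TopologicalSpace.upgradeIsCompletelyMetrizable E
  let := UniformSpace.metricSpace C(T, E)
  have : TopologicalSpace.IsCompletelyMetrizableSpace C(T, E) := inferInstance
  infer_instance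

theorem measure_eq_of_forall_map_evalAt_eq [MeasurableSpace E] [BorelSpace E]
    [MeasurableSpace C(T, E)] [BorelSpace C(T, E)] {μ ν : Measure C(T, E)} [IsFiniteMeasure ν]
    (h : ∀ (m : ℕ) (ts : Fin m → T), μ.map (evalAt ts) = ν.map (evalAt ts)) : μ = ν := by
  have : PolishSpace C(T, E) := polishSpace_continuousMap
  obtain ⟨D, hDc, hD⟩ := TopologicalSpace.exists_countable_dense T
  have := hDc.to_subtype
  -- Lusin–Souslin: evaluation on a countable dense set is a Borel isomorphism onto its image.
  have hemb : MeasurableEmbedding (evalAt ((↑) : D → T) : C(T, E) → D → E) :=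
    (continuous_evalAt _).measurableEmbedding (evalAt_injective_of_dense hD)
  rw [← hemb.comap_map μ, map_evalAt_eq_of_forall_fin h, hemb.comap_map]

end FiniteDimensionalDistributions

section PathLaw

variable {E : Type*} [MetricSpace E]

lemma continuous_shift (t : ℝ) : Continuous (shift t : C(ℝ, E) → C(ℝ, E)) :=
  ContinuousMap.continuous_precomp _

lemma shift_shift (s t : ℝ) (x : C(ℝ, E)) : shift s (shift t x) = shift (t + s) x := by
  ext u
  simp [shift, add_assoc]

variable [MeasurableSpace C(ℝ, E)] [BorelSpace C(ℝ, E)]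

/-- The law of the path `x (t + ·)` when `x` has law `μ`. -/
noncomputable def shiftLaw (t : ℝ) (μ : ProbabilityMeasure C(ℝ, E)) : ProbabilityMeasure C(ℝ, E) :=
  μ.map (continuous_shift t).measurable.aemeasurable

lemma continuous_shiftLaw (t : ℝ) :
    Continuous (shiftLaw t : ProbabilityMeasure C(ℝ, E) → ProbabilityMeasure C(ℝ, E)) :=
  ProbabilityMeasure.continuous_map (continuous_shift t)

variable [CompleteSpace E] [SecondCountableTopology E] [MeasurableSpace E] [BorelSpace E]
  {L : ℝ → ProbabilityMeasure C(ℝ, E)}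

lemma isTightMeasureSet_map_eval_of_isAlmostAutomorphic {s : ℝ}
    (hL : IsAlmostAutomorphic fun t => finDimLaw (fun _ : Fin 1 => s) (L t)) :
    IsTightMeasureSet
      (Measure.map (fun x : C(ℝ, E) => x s) '' range fun t => (L t : Measure C(ℝ, E))) := by
  have htight := (isTightMeasureSet_of_isCompact_closure hL.isCompact_closure_range).map
    (continuous_apply (0 : Fin 1))
  refine htight.subset ?_
  rintro _ ⟨_, ⟨t, rfl⟩, rfl⟩
  refine ⟨_, ⟨_, mem_range_self t, rfl⟩, ?_⟩
  exact Measure.map_map (measurable_pi_apply 0) (measurable_evalAt _)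

lemma isCompact_closure_range_of_isAlmostAutomorphic_finDimLaw
    (hL : ∀ s, IsAlmostAutomorphic fun t => finDimLaw (fun _ : Fin 1 => s) (L t))
    (hosc : ∀ a b : ℝ, ∀ ε : ℝ, 0 < ε → ∀ η : ℝ, 0 < η → ∃ δ : ℝ, 0 < δ ∧
      ∀ t, (L t : Measure C(ℝ, E)) (oscillationSet (Icc a b) δ η) ≤ ENNReal.ofReal ε) :
    IsCompact (closure (range L)) := by
  refine isCompact_closure_of_isTightMeasureSet ?_
  have himage : {((μ : ProbabilityMeasure C(ℝ, E)) : Measure C(ℝ, E)) | μ ∈ range L} =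
      range fun t => (L t : Measure C(ℝ, E)) := (range_comp _ L).symm
  rw [himage]
  refine isTightMeasureSet_of_forall_oscillationSet_le
    (fun s => isTightMeasureSet_map_eval_of_isAlmostAutomorphic (hL s)) fun C hC ε hε η hη => ?_
  obtain ⟨ε', -, hε'ε⟩ := ENNReal.lt_iff_exists_real_btwn.1 hε
  obtain ⟨δ, hδ, hle⟩ := hosc (sInf C) (sSup C) ε' (ENNReal.ofReal_pos.1 hε'ε.1) η hη
  refine ⟨δ, hδ, forall_mem_range.2 fun t => ?_⟩
  exact (measure_mono (oscillationSet_mono hC.isBounded.subset_Icc_sInf_sSup δ η)).trans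
    ((hle t).trans hε'ε.2.le)

theorem isAlmostAutomorphic_iff_forall_finDimLaw
    (hshift : ∀ s t, shiftLaw s (L t) = L (t + s))
    (hosc : ∀ a b : ℝ, ∀ ε : ℝ, 0 < ε → ∀ η : ℝ, 0 < η → ∃ δ : ℝ, 0 < δ ∧
      ∀ t, (L t : Measure C(ℝ, E)) (oscillationSet (Icc a b) δ η) ≤ ENNReal.ofReal ε) :
    IsAlmostAutomorphic L ↔
      ∀ (m : ℕ) (ts : Fin m → ℝ), IsAlmostAutomorphic fun t => finDimLaw ts (L t) := by
  refine ⟨fun h m ts => h.continuous_comp (continuous_finDimLaw ts), fun h => ?_⟩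
  refine IsAlmostAutomorphic.of_forall_comp
    (isCompact_closure_range_of_isAlmostAutomorphic_finDimLaw (fun s => h 1 _) hosc)
    (fun s => ⟨shiftLaw s, continuous_shiftLaw s, hshift s⟩)
    (ι := Σ m : ℕ, Fin m → ℝ) (Φ := fun i => finDimLaw i.2)
    (fun i => continuous_finDimLaw i.2) (fun μ ν hμν => ?_) fun i => h i.1 i.2
  exact ProbabilityMeasure.toMeasure_injective <| measure_eq_of_forall_map_evalAt_eq fun m ts =>
    congrArg ProbabilityMeasure.toMeasure (hμν ⟨m, ts⟩)

end PathLaw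

/-- Under the tightness/equicontinuity condition, a process is almost
automorphic in finite dimensional distributions iff it is almost automorphic in
distribution (on path space). -/
theorem stmt_16 {E Ω : Type*} [MetricSpace E] [CompleteSpace E] [SecondCountableTopology E]
    [MeasurableSpace E] [BorelSpace E]
    [MeasurableSpace C(ℝ, E)] [BorelSpace C(ℝ, E)]
    [MeasurableSpace Ω] (P : Measure Ω) [IsProbabilityMeasure P]
    (Xp : Ω → C(ℝ, E)) (hXp : Measurable Xp)
    (htight : ∀ a b : ℝ, ∀ ε : ℝ, 0 < ε → ∀ η : ℝ, 0 < η → ∃ δ : ℝ, 0 < δ ∧ ∀ r : ℝ,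
      P {ω | ∃ t ∈ Set.Icc a b, ∃ s ∈ Set.Icc a b,
          |t - s| < δ ∧ η < dist (Xp ω (r + t)) (Xp ω (r + s))}
        < ENNReal.ofReal ε)
    (Lfd : (m : ℕ) → (Fin m → ℝ) → ℝ → ProbabilityMeasure (Fin m → E))
    (hLfd : ∀ (m : ℕ) (ts : Fin m → ℝ) (t : ℝ),
      (Lfd m ts t : Measure (Fin m → E)) = Measure.map (fun ω i => Xp ω (t + ts i)) P)
    (Lpath : ℝ → ProbabilityMeasure C(ℝ, E))
    (hLpath : ∀ t : ℝ,
      (Lpath t : Measure C(ℝ, E)) = Measure.map (fun ω => shift t (Xp ω)) P) :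
    (∀ (m : ℕ) (ts : Fin m → ℝ), IsAlmostAutomorphic (Lfd m ts)) ↔
      IsAlmostAutomorphic Lpath := by
  have hpath_meas (t : ℝ) : Measurable fun ω => shift t (Xp ω) :=
    (continuous_shift t).measurable.comp hXp
  have hshift (s t : ℝ) : shiftLaw s (Lpath t) = Lpath (t + s) := by
    refine ProbabilityMeasure.toMeasure_injective ?_
    rw [shiftLaw, ProbabilityMeasure.toMeasure_map, hLpath, hLpath,
      Measure.map_map (continuous_shift s).measurable (hpath_meas t)]
    exact congrArg (P.map ·) (funext fun ω => shift_shift s t (Xp ω))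
  have hfinDim (m : ℕ) (ts : Fin m → ℝ) : (fun t => finDimLaw ts (Lpath t)) = Lfd m ts := by
    refine funext fun t => ProbabilityMeasure.toMeasure_injective ?_
    rw [finDimLaw, ProbabilityMeasure.toMeasure_map, hLpath, hLfd,
      Measure.map_map (measurable_evalAt ts) (hpath_meas t)]
    rfl
  have hosc (a b ε : ℝ) (hε : 0 < ε) (η : ℝ) (hη : 0 < η) : ∃ δ : ℝ, 0 < δ ∧
      ∀ r, (Lpath r : Measure C(ℝ, E)) (oscillationSet (Icc a b) δ η) ≤ ENNReal.ofReal ε := by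
    obtain ⟨δ, hδ, hlt⟩ := htight a b ε hε η hη
    refine ⟨δ, hδ, fun r => ?_⟩
    rw [hLpath, Measure.map_apply (hpath_meas r)
      (isOpen_oscillationSet _ _ _).measurableSet]
    exact (hlt r).le
  simp only [isAlmostAutomorphic_iff_forall_finDimLaw hshift hosc, hfinDim]
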